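/- Let T > 0, let K be a Volterra kernel on [0,T] satisfying Condition (A) with exponent α ∈ [0, 1/4), and let R(s,t) := ∫_0^{min(s,t)} K(t,r) K(s,r) dr be the associated covariance function. If φ: [0,T]² → ℝ is strongly λ-Hölder bi-continuous with λ > α, or λ-Hölder bi-continuous with λ > 2α, then the 2D Young–Stieltjes integral ∫_{[0,T]²} φ(u,v) dR(u,v) exists (the Riemann–Stieltjes sums Σ_{i,j} φ(u_i,v_j) R(u_i,u_{i+1}; v_j,v_{j+1}) converge as the mesh of the grid partition tends to 0), and its value equals ∫_0^T (K*⊗K*)φ(r,r) dr. -/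

import Mathlib

open MeasureTheory Set

noncomputable section

namespace YS

variable {E : Type*} [NormedAddCommGroup E] [NormedSpace ℝ E]

/-- A Volterra kernel: a measurable `K : ℝ² → ℝ` with `K t s = 0` whenever `s ≥ t`. -/
def IsVolterraKernel (K : ℝ → ℝ → ℝ) : Prop :=
  Measurable (Function.uncurry K) ∧ ∀ t s : ℝ, t ≤ s → K t s = 0

/-- Condition (A) with exponent `α` and constant `C`; here `K' t s` denotes the partial
derivative `∂K(t,s)/∂t`, whose existence is part of the condition. -/
def CondA (T α C : ℝ) (K K' : ℝ → ℝ → ℝ) : Prop :=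
  (∀ s t : ℝ, 0 < s → s < t → t ≤ T → |K t s| ≤ C * s ^ (-α) * (t - s) ^ (-α)) ∧
  ∀ s t : ℝ, 0 < s → s < t → t ≤ T →
    HasDerivAt (fun r => K r s) (K' t s) t ∧ |K' t s| ≤ C * (t - s) ^ (-(α + 1))

/-- The operator `𝒦*`:  `(𝒦*φ)(s) = φ(s)K(T,s) + ∫_s^T [φ(r) − φ(s)] ∂K(r,s)/∂r dr`. -/
def Kstar (T : ℝ) (K K' : ℝ → ℝ → ℝ) (φ : ℝ → E) (s : ℝ) : E :=
  K T s • φ s + ∫ r in s..T, K' r s • (φ r - φ s)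

/-- The operator `A^K`. -/
def AK (T : ℝ) (K' : ℝ → ℝ → ℝ) (φ : ℝ → E) (s : ℝ) : E :=
  ∫ r in s..T, K' r s • (φ r - φ s)

/-- Rectangular increment `f(u₁,u₂;v₁,v₂)`. -/
def rectInc (ψ : ℝ → ℝ → E) (u₁ u₂ v₁ v₂ : ℝ) : E :=
  ψ u₁ v₁ + ψ u₂ v₂ - ψ u₁ v₂ - ψ u₂ v₁

/-- The operator `B^K`. -/
def BK (T : ℝ) (K' : ℝ → ℝ → ℝ) (ψ : ℝ → ℝ → E) (u v : ℝ) : E :=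
  ∫ r₂ in v..T, ∫ r₁ in u..T, (K' r₁ u * K' r₂ v) • rectInc ψ u r₁ v r₂

/-- The operator `𝒦* ⊗ 𝒦*`. -/
def KstarT (T : ℝ) (K K' : ℝ → ℝ → ℝ) (ψ : ℝ → ℝ → E) (u v : ℝ) : E :=
  (K T u * K T v) • ψ u v + K T v • AK T K' (fun x => ψ x v) u +
    K T u • AK T K' (fun y => ψ u y) v + BK T K' ψ u v

/-- A partition `0 = s₀ < s₁ < ⋯ < s_n = T` of `[0,T]`. -/
structure Partition (T : ℝ) where
  n : ℕ
  pts : ℕ → ℝ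
  n_pos : 0 < n
  first : pts 0 = 0
  last : pts n = T
  lt : ∀ i < n, pts i < pts (i + 1)

/-- Mesh of a partition: the largest increment. -/
def Partition.mesh {T : ℝ} (P : Partition T) : ℝ :=
  (Finset.range P.n).sup' (Finset.nonempty_range_iff.mpr P.n_pos.ne')
    fun i => P.pts (i + 1) - P.pts i

/-- One-dimensional step approximation `φ^π`. -/
def step1 {T : ℝ} (P : Partition T) (φ : ℝ → E) (s : ℝ) : E :=
  ∑ i ∈ Finset.range P.n,
    (Set.Ico (P.pts i) (P.pts (i + 1))).indicator (fun _ => φ (P.pts i)) s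

/-- Two-dimensional step approximation `ψ^π` for the grid partition `P × Q`. -/
def step2 {T : ℝ} (P Q : Partition T) (ψ : ℝ → ℝ → E) (u v : ℝ) : E :=
  ∑ i ∈ Finset.range P.n, ∑ j ∈ Finset.range Q.n,
    ((Set.Ico (P.pts i) (P.pts (i + 1))) ×ˢ (Set.Ico (Q.pts j) (Q.pts (j + 1)))).indicator
      (fun _ => ψ (P.pts i) (Q.pts j)) (u, v)

/-- `λ`-Hölder continuity on `[0,T]` with constant `C`. -/
def IsHolderWith (T lam C : ℝ) (φ : ℝ → E) : Prop :=
  ∀ t₁ ∈ Icc (0:ℝ) T, ∀ t₂ ∈ Icc (0:ℝ) T, ‖φ t₁ - φ t₂‖ ≤ C * |t₁ - t₂| ^ lam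

/-- `λ`-Hölder continuity on `[0,T]`. -/
def IsHolder (T lam : ℝ) (φ : ℝ → E) : Prop := ∃ C : ℝ, IsHolderWith T lam C φ

/-- `λ`-Hölder bi-continuity with constant `C`. -/
def IsHolderBiWith (T lam C : ℝ) (ψ : ℝ → ℝ → E) : Prop :=
  (∀ u₁ ∈ Icc (0:ℝ) T, ∀ u₂ ∈ Icc (0:ℝ) T, ∀ v ∈ Icc (0:ℝ) T,
      ‖ψ u₂ v - ψ u₁ v‖ ≤ C * |u₂ - u₁| ^ lam) ∧
  ∀ u ∈ Icc (0:ℝ) T, ∀ v₁ ∈ Icc (0:ℝ) T, ∀ v₂ ∈ Icc (0:ℝ) T,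
      ‖ψ u v₂ - ψ u v₁‖ ≤ C * |v₂ - v₁| ^ lam

/-- `λ`-Hölder bi-continuity. -/
def IsHolderBi (T lam : ℝ) (ψ : ℝ → ℝ → E) : Prop := ∃ C : ℝ, IsHolderBiWith T lam C ψ

/-- Strong `λ`-Hölder bi-continuity with constant `C`. -/
def IsStrongHolderBiWith (T lam C : ℝ) (ψ : ℝ → ℝ → E) : Prop :=
  IsHolderBiWith T lam C ψ ∧
  ∀ u₁ ∈ Icc (0:ℝ) T, ∀ u₂ ∈ Icc (0:ℝ) T, ∀ v₁ ∈ Icc (0:ℝ) T, ∀ v₂ ∈ Icc (0:ℝ) T,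
    ‖rectInc ψ u₁ u₂ v₁ v₂‖ ≤ C * |u₂ - u₁| ^ lam * |v₂ - v₁| ^ lam

/-- Strong `λ`-Hölder bi-continuity. -/
def IsStrongHolderBi (T lam : ℝ) (ψ : ℝ → ℝ → E) : Prop :=
  ∃ C : ℝ, IsStrongHolderBiWith T lam C ψ

/-- The covariance function `R(s,t) = ∫_0^{s∧t} K(t,r)K(s,r) dr` of the Volterra process. -/
def covR (K : ℝ → ℝ → ℝ) (s t : ℝ) : ℝ := ∫ r in (0:ℝ)..(min s t), K t r * K s r

/-- The 2D Riemann–Stieltjes sum of `f` against `g` over the grid partition `P × Q`. -/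
def RSsum {T : ℝ} (P Q : Partition T) (f g : ℝ → ℝ → ℝ) : ℝ :=
  ∑ i ∈ Finset.range P.n, ∑ j ∈ Finset.range Q.n,
    f (P.pts i) (Q.pts j) *
      rectInc g (P.pts i) (P.pts (i + 1)) (Q.pts j) (Q.pts (j + 1))

/-!
For fixed `r`, the Stieltjes sum `S_P f` against `K(·, r)` and the operator `L f = (𝒦*f)(r)` are
linear functionals of `f`, and splitting `L f` along the intervals of `P` shows that on
`(α + 2κ)`-Hölder functions they differ by `O(|P|^κ)`, with a constant that is singular in `r` only
through `r^(-α)` and `ϱ_P(r)^(-α)`, where `ϱ_P(r)` is the distance from `r` to the next point of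
`P` relative to the length of the interval containing `r`. The double sum of `φ` against `R` is
`∫_0^T (S_P ⊗ S_Q) φ dr`, while `(𝒦* ⊗ 𝒦*)φ(r, r) = (L ⊗ L) φ`, so that the error is controlled by
`S_P ⊗ S_Q - L ⊗ L = (S_P - L) ⊗ S_Q + L ⊗ (S_Q - L)`. The products of singular factors are bounded
by the fourth powers `r^(-4α)`, `(T - r)^(-4α)`, `ϱ_P(r)^(-4α)` and `ϱ_Q(r)^(-4α)`. These are
integrable because `4α < 1`, and `∫_0^T ϱ_P^(-4α) dr = T / (1 - 4α)` does not depend on `P`.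

A `λ`-Hölder bi-continuous function is strongly `λ/2`-Hölder bi-continuous, which reduces the case
`λ > 2α` to the case `λ > α`.
-/

open Filter Topology

section Partition

variable {T γ r : ℝ}

lemma Partition.pts_mono (P : Partition T) {i j : ℕ} (hij : i ≤ j) (hj : j ≤ P.n) :
    P.pts i ≤ P.pts j := by
  induction j, hij using Nat.le_induction with
  | base => exact le_rfl
  | succ m _ ih => exact (ih (by lia)).trans (P.lt m (by lia)).le

lemma Partition.pts_mem_Icc (P : Partition T) {i : ℕ} (hi : i ≤ P.n) : P.pts i ∈ Icc (0 : ℝ) T :=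
  ⟨P.first.symm.le.trans (P.pts_mono (Nat.zero_le i) hi), (P.pts_mono hi le_rfl).trans P.last.le⟩

lemma Partition.exists_mem_Ico (P : Partition T) (hr : r ∈ Ico (0 : ℝ) T) :
    ∃ i < P.n, r ∈ Ico (P.pts i) (P.pts (i + 1)) := by
  by_contra! hcon
  have pts_le : ∀ i ≤ P.n, P.pts i ≤ r := by
    intro i
    induction i with
    | zero => exact fun _ => P.first.trans_le hr.1
    | succ m ih => exact fun hm => not_lt.1 fun h => hcon m hm ⟨ih (by lia), h⟩
  exact (pts_le P.n le_rfl).not_gt (hr.2.trans_eq P.last.symm)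

lemma Partition.sub_le_mesh (P : Partition T) {i : ℕ} (hi : i < P.n) :
    P.pts (i + 1) - P.pts i ≤ P.mesh :=
  Finset.le_sup' (fun i => P.pts (i + 1) - P.pts i) (Finset.mem_range.2 hi)

lemma Partition.mesh_pos (P : Partition T) : 0 < P.mesh :=
  (sub_pos.2 (P.lt 0 P.n_pos)).trans_le (P.sub_le_mesh P.n_pos)

lemma Partition.mesh_le (P : Partition T) : P.mesh ≤ T := by
  refine Finset.sup'_le _ _ fun i hi => ?_
  have hi' := Finset.mem_range.1 hi
  linarith [(P.pts_mem_Icc hi'.le).1, (P.pts_mem_Icc hi').2]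

/-- The uniform partition of `[0,T]` into `N + 1` intervals. -/
def Partition.uniform (hT : 0 < T) (N : ℕ) : Partition T where
  n := N + 1
  pts i := T / (N + 1) * i
  n_pos := N.succ_pos
  first := by simp
  last := by push_cast; field_simp
  lt i _ := by gcongr; exact i.lt_succ_self

lemma Partition.tendsto_mesh_uniform (hT : 0 < T) :
    Tendsto (fun N => (Partition.uniform hT N).mesh) atTop (𝓝 0) := by
  have mesh_le (N : ℕ) : (Partition.uniform hT N).mesh ≤ T * (1 / (N + 1)) := by
    refine Finset.sup'_le _ _ fun i _ => le_of_eq ?_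
    simp only [Partition.uniform]
    push_cast
    ring
  refine squeeze_zero (fun N => (Partition.mesh_pos _).le) mesh_le ?_
  simpa only [mul_zero] using (tendsto_one_div_add_atTop_nhds_zero_nat (𝕜 := ℝ)).const_mul T

/-- The distance from `r` to the next partition point, relative to the length of the partition
interval containing `r`; it is `0` outside `[0,T)`. -/
def Partition.relGap (P : Partition T) (r : ℝ) : ℝ :=
  ∑ i ∈ Finset.range P.n, (Ico (P.pts i) (P.pts (i + 1))).indicator
    (fun r => (P.pts (i + 1) - r) / (P.pts (i + 1) - P.pts i)) r

lemma Partition.relGap_of_mem_Ico (P : Partition T) {i : ℕ} (hi : i < P.n)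
    (hr : r ∈ Ico (P.pts i) (P.pts (i + 1))) :
    P.relGap r = (P.pts (i + 1) - r) / (P.pts (i + 1) - P.pts i) := by
  rw [relGap, Finset.sum_eq_single_of_mem i (Finset.mem_range.2 hi), indicator_of_mem hr]
  refine fun j hj hji => indicator_of_notMem (fun hrj => ?_) _
  rcases hji.lt_or_gt with h | h
  · exact (hrj.2.trans_le (P.pts_mono h hi.le)).not_ge hr.1
  · exact (hr.2.trans_le (P.pts_mono h (Finset.mem_range.1 hj).le)).not_ge hrj.1

lemma Partition.relGap_pos (P : Partition T) (hr : r ∈ Ico (0 : ℝ) T) : 0 < P.relGap r := by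
  obtain ⟨i, hi, hri⟩ := P.exists_mem_Ico hr
  rw [P.relGap_of_mem_Ico hi hri]
  exact div_pos (sub_pos.2 hri.2) (sub_pos.2 (P.lt i hi))

lemma intervalIntegrable_sub_left_rpow (hγ : -1 < γ) (a b t : ℝ) :
    IntervalIntegrable (fun x => (t - x) ^ γ) volume a b := by
  simpa using
    (intervalIntegral.intervalIntegrable_rpow' (a := t - a) (b := t - b) hγ).comp_sub_left t

lemma intervalIntegrable_sub_right_rpow (hγ : -1 < γ) (a b t : ℝ) :
    IntervalIntegrable (fun x => (x - t) ^ γ) volume a b := by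
  simpa using
    (intervalIntegral.intervalIntegrable_rpow' (a := a - t) (b := b - t) hγ).comp_sub_right t

lemma integral_sub_left_rpow_neg (hγ : γ < 1) (a b : ℝ) :
    ∫ x in a..b, (b - x) ^ (-γ) = (b - a) ^ (1 - γ) / (1 - γ) := by
  rw [intervalIntegral.integral_comp_sub_left (fun x => x ^ (-γ)) b,
    integral_rpow (Or.inl (by linarith)), sub_self, neg_add_eq_sub, Real.zero_rpow (by linarith),
    sub_zero]

lemma integral_sub_right_rpow_sub_one (hγ : 0 < γ) (a b t : ℝ) :
    ∫ x in a..b, (x - t) ^ (γ - 1) = ((b - t) ^ γ - (a - t) ^ γ) / γ := by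
  rw [intervalIntegral.integral_comp_sub_right (fun x => x ^ (γ - 1)) t,
    integral_rpow (Or.inl (by linarith)), sub_add_cancel]

lemma Partition.relGap_rpow_eqOn (P : Partition T) {i : ℕ} (hi : i < P.n) :
    EqOn (fun r => (P.pts (i + 1) - P.pts i) ^ γ * (P.pts (i + 1) - r) ^ (-γ))
      (fun r => P.relGap r ^ (-γ)) (uIoo (P.pts i) (P.pts (i + 1))) := by
  rw [uIoo_of_le (P.lt i hi).le]
  intro r hr
  have hgap : 0 ≤ P.pts (i + 1) - P.pts i := (sub_pos.2 (P.lt i hi)).le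
  simp only [P.relGap_of_mem_Ico hi (Ioo_subset_Ico_self hr),
    Real.div_rpow (sub_pos.2 hr.2).le hgap, Real.rpow_neg hgap, div_inv_eq_mul, mul_comm]

lemma Partition.intervalIntegrable_relGap_rpow_pts (P : Partition T) (hγ : γ < 1) {i : ℕ}
    (hi : i < P.n) :
    IntervalIntegrable (fun r => P.relGap r ^ (-γ)) volume (P.pts i) (P.pts (i + 1)) :=
  ((intervalIntegrable_sub_left_rpow (by linarith) _ _ _).const_mul _).congr_uIoo
    (P.relGap_rpow_eqOn hi)

lemma Partition.intervalIntegrable_relGap_rpow (P : Partition T) (hγ : γ < 1) :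
    IntervalIntegrable (fun r => P.relGap r ^ (-γ)) volume 0 T := by
  simpa only [P.first, P.last] using IntervalIntegrable.trans_iterate (a := P.pts) (n := P.n)
    fun i hi => P.intervalIntegrable_relGap_rpow_pts hγ hi

lemma Partition.integral_relGap_rpow (P : Partition T) (hγ : γ < 1) :
    ∫ r in 0..T, P.relGap r ^ (-γ) = T / (1 - γ) := by
  have integral_pts (i : ℕ) (hi : i ∈ Finset.range P.n) :
      ∫ r in P.pts i..P.pts (i + 1), P.relGap r ^ (-γ) =
        (P.pts (i + 1) - P.pts i) / (1 - γ) := by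
    have hi := Finset.mem_range.1 hi
    rw [← intervalIntegral.integral_congr_uIoo (P.relGap_rpow_eqOn hi),
      intervalIntegral.integral_const_mul, integral_sub_left_rpow_neg hγ, ← mul_div_assoc,
      ← Real.rpow_add (sub_pos.2 (P.lt i hi)), add_sub_cancel, Real.rpow_one]
  have adjacent := intervalIntegral.sum_integral_adjacent_intervals (a := P.pts) (n := P.n)
    fun i hi => P.intervalIntegrable_relGap_rpow_pts hγ hi
  rw [P.first, P.last] at adjacent
  rw [← adjacent, Finset.sum_congr rfl integral_pts, ← Finset.sum_div, Finset.sum_range_sub,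
    P.first, P.last, sub_zero]

end Partition

section Holder

variable {F : Type*} [NormedAddCommGroup F] {T lam α H M r : ℝ} {f : ℝ → F} {φ : ℝ → ℝ → F}

lemma IsHolderWith.nonneg (hT : 0 < T) (hf : IsHolderWith T lam H f) : 0 ≤ H := by
  have h0T := (norm_nonneg _).trans (hf 0 (left_mem_Icc.2 hT.le) T (right_mem_Icc.2 hT.le))
  rw [zero_sub, abs_neg, abs_of_pos hT] at h0T
  exact nonneg_of_mul_nonneg_left h0T (Real.rpow_pos_of_pos hT lam)

lemma IsHolderWith.continuousOn (hlam : 0 < lam) (hf : IsHolderWith T lam H f) :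
    ContinuousOn f (Icc 0 T) := by
  intro x hx
  have bound_tendsto : Tendsto (fun y => H * |y - x| ^ lam) (𝓝[Icc 0 T] x) (𝓝 0) := by
    have : ContinuousAt (fun y => H * |y - x| ^ lam) x :=
      ((by fun_prop : ContinuousAt (fun y => |y - x|) x).rpow_const (Or.inr hlam.le)).const_mul H
    simpa only [sub_self, abs_zero, Real.zero_rpow hlam.ne', mul_zero] using
      this.tendsto.mono_left nhdsWithin_le_nhds
  refine tendsto_iff_norm_sub_tendsto_zero.2 (squeeze_zero' (.of_forall fun _ => norm_nonneg _) ?_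
    bound_tendsto)
  filter_upwards [self_mem_nhdsWithin] with y hy using hf y hy x hx

lemma IsHolderBiWith.isHolderWith_left (hφ : IsHolderBiWith T lam M φ) {y : ℝ}
    (hy : y ∈ Icc 0 T) : IsHolderWith T lam M fun x => φ x y :=
  fun x₁ hx₁ x₂ hx₂ => hφ.1 x₂ hx₂ x₁ hx₁ y hy

lemma IsHolderBiWith.isHolderWith_right (hφ : IsHolderBiWith T lam M φ) {x : ℝ}
    (hx : x ∈ Icc 0 T) : IsHolderWith T lam M (φ x) :=
  fun y₁ hy₁ y₂ hy₂ => hφ.2 x hx y₂ hy₂ y₁ hy₁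

lemma IsHolderBiWith.nonneg (hT : 0 < T) (hφ : IsHolderBiWith T lam M φ) : 0 ≤ M :=
  (hφ.isHolderWith_right (left_mem_Icc.2 hT.le)).nonneg hT

lemma rectInc_eq_sub_left (φ : ℝ → ℝ → F) (u₁ u₂ v₁ v₂ : ℝ) :
    rectInc φ u₁ u₂ v₁ v₂ = (φ u₂ v₂ - φ u₁ v₂) - (φ u₂ v₁ - φ u₁ v₁) := by
  rw [rectInc]
  abel

lemma rectInc_swap (φ : ℝ → ℝ → F) (u₁ u₂ v₁ v₂ : ℝ) :
    rectInc (fun y x => φ x y) u₁ u₂ v₁ v₂ = rectInc φ v₁ v₂ u₁ u₂ := by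
  simp only [rectInc]
  abel

lemma IsHolderBiWith.swap (hφ : IsHolderBiWith T lam M φ) :
    IsHolderBiWith T lam M fun y x => φ x y :=
  ⟨fun u₁ hu₁ u₂ hu₂ v hv => hφ.2 v hv u₁ hu₁ u₂ hu₂,
    fun u hu v₁ hv₁ v₂ hv₂ => hφ.1 v₁ hv₁ v₂ hv₂ u hu⟩

lemma IsStrongHolderBiWith.swap (hφ : IsStrongHolderBiWith T lam M φ) :
    IsStrongHolderBiWith T lam M fun y x => φ x y := by
  refine ⟨hφ.1.swap, fun u₁ hu₁ u₂ hu₂ v₁ hv₁ v₂ hv₂ => ?_⟩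
  rw [rectInc_swap, mul_right_comm]
  exact hφ.2 v₁ hv₁ v₂ hv₂ u₁ hu₁ u₂ hu₂

lemma IsStrongHolderBiWith.isHolderWith_sub (hφ : IsStrongHolderBiWith T lam M φ) {x₁ x₂ : ℝ}
    (hx₁ : x₁ ∈ Icc 0 T) (hx₂ : x₂ ∈ Icc 0 T) :
    IsHolderWith T lam (M * |x₁ - x₂| ^ lam) fun y => φ x₁ y - φ x₂ y := by
  intro y₁ hy₁ y₂ hy₂
  rw [← rectInc_eq_sub_left]
  exact hφ.2 x₂ hx₂ x₁ hx₁ y₂ hy₂ y₁ hy₁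

lemma IsStrongHolderBiWith.isHolderWith_apply {a : ℝ} {A : (ℝ → F) → F}
    (hφ : IsStrongHolderBiWith T lam M φ) (hr : r ∈ Icc 0 T)
    (A_sub : ∀ x₁ ∈ Icc 0 T, ∀ x₂ ∈ Icc 0 T,
      A (fun y => φ x₁ y - φ x₂ y) = A (φ x₁) - A (φ x₂))
    (norm_A_le : ∀ f H, IsHolderWith T lam H f → ‖f r‖ ≤ H → ‖A f‖ ≤ a * H) :
    IsHolderWith T lam (a * M) fun x => A (φ x) := by
  intro x₁ hx₁ x₂ hx₂
  rw [← A_sub x₁ hx₁ x₂ hx₂, mul_assoc]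
  exact norm_A_le _ _ (hφ.isHolderWith_sub hx₁ hx₂) (hφ.1.1 x₂ hx₂ x₁ hx₁ r hr)

lemma IsHolderBiWith.norm_rectInc_le_left (hφ : IsHolderBiWith T lam M φ) {u₁ u₂ v₁ v₂ : ℝ}
    (hu₁ : u₁ ∈ Icc 0 T) (hu₂ : u₂ ∈ Icc 0 T) (hv₁ : v₁ ∈ Icc 0 T) (hv₂ : v₂ ∈ Icc 0 T) :
    ‖rectInc φ u₁ u₂ v₁ v₂‖ ≤ 2 * M * |u₂ - u₁| ^ lam := by
  rw [rectInc_eq_sub_left, mul_assoc, two_mul]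
  exact (norm_sub_le _ _).trans
    (add_le_add (hφ.1 u₁ hu₁ u₂ hu₂ v₂ hv₂) (hφ.1 u₁ hu₁ u₂ hu₂ v₁ hv₁))

lemma min_rpow_le_mul_rpow_half {x y : ℝ} (hx : 0 ≤ x) (hy : 0 ≤ y) (hlam : 0 ≤ lam) :
    min x y ^ lam ≤ x ^ (lam / 2) * y ^ (lam / 2) := by
  have hmin : 0 ≤ min x y := le_min hx hy
  calc min x y ^ lam = min x y ^ (lam / 2) * min x y ^ (lam / 2) := by
        rw [← Real.rpow_add_of_nonneg hmin (by linarith) (by linarith), add_halves]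
    _ ≤ x ^ (lam / 2) * y ^ (lam / 2) := by
        gcongr
        exacts [min_le_left _ _, min_le_right _ _]

lemma IsHolderBiWith.norm_rectInc_le_half (hT : 0 < T) (hlam : 0 ≤ lam)
    (hφ : IsHolderBiWith T lam M φ) {u₁ u₂ v₁ v₂ : ℝ} (hu₁ : u₁ ∈ Icc 0 T)
    (hu₂ : u₂ ∈ Icc 0 T) (hv₁ : v₁ ∈ Icc 0 T) (hv₂ : v₂ ∈ Icc 0 T) :
    ‖rectInc φ u₁ u₂ v₁ v₂‖ ≤ 2 * M * |u₂ - u₁| ^ (lam / 2) * |v₂ - v₁| ^ (lam / 2) := by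
  have hM := hφ.nonneg hT
  have norm_le_min : ‖rectInc φ u₁ u₂ v₁ v₂‖ ≤ 2 * M * min |u₂ - u₁| |v₂ - v₁| ^ lam := by
    rcases min_choice |u₂ - u₁| |v₂ - v₁| with h | h <;> rw [h]
    · exact hφ.norm_rectInc_le_left hu₁ hu₂ hv₁ hv₂
    · rw [← rectInc_swap]
      exact hφ.swap.norm_rectInc_le_left hv₁ hv₂ hu₁ hu₂
  rw [mul_assoc (2 * M)]
  refine norm_le_min.trans ?_
  gcongr
  exact min_rpow_le_mul_rpow_half (abs_nonneg _) (abs_nonneg _) hlam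

lemma abs_sub_rpow_le_half (hlam : 0 ≤ lam) {x y : ℝ} (hx : x ∈ Icc 0 T) (hy : y ∈ Icc 0 T) :
    |x - y| ^ lam ≤ T ^ (lam / 2) * |x - y| ^ (lam / 2) := by
  calc |x - y| ^ lam = |x - y| ^ (lam / 2) * |x - y| ^ (lam / 2) := by
        rw [← Real.rpow_add_of_nonneg (abs_nonneg _) (by linarith) (by linarith), add_halves]
    _ ≤ T ^ (lam / 2) * |x - y| ^ (lam / 2) := by
        gcongr
        exact abs_sub_le_of_nonneg_of_le hx.1 hx.2 hy.1 hy.2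

lemma IsHolderBi.isStrongHolderBi_half (hT : 0 < T) (hlam : 0 ≤ lam) (hφ : IsHolderBi T lam φ) :
    IsStrongHolderBi T (lam / 2) φ := by
  obtain ⟨M, hφ⟩ := hφ
  have hM := hφ.nonneg hT
  have weaken {d x y : ℝ} (hx : x ∈ Icc 0 T) (hy : y ∈ Icc 0 T) (hd : d ≤ M * |x - y| ^ lam) :
      d ≤ (M * T ^ (lam / 2) + 2 * M) * |x - y| ^ (lam / 2) := calc
    d ≤ M * (T ^ (lam / 2) * |x - y| ^ (lam / 2)) :=
        hd.trans (by gcongr; exact abs_sub_rpow_le_half hlam hx hy)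
    _ = M * T ^ (lam / 2) * |x - y| ^ (lam / 2) := by ring
    _ ≤ (M * T ^ (lam / 2) + 2 * M) * |x - y| ^ (lam / 2) := by gcongr; linarith
  refine ⟨M * T ^ (lam / 2) + 2 * M, ⟨fun u₁ hu₁ u₂ hu₂ v hv => weaken hu₂ hu₁ ?_,
    fun u hu v₁ hv₁ v₂ hv₂ => weaken hv₂ hv₁ ?_⟩, fun u₁ hu₁ u₂ hu₂ v₁ hv₁ v₂ hv₂ => ?_⟩
  · exact hφ.1 u₁ hu₁ u₂ hu₂ v hv
  · exact hφ.2 u hu v₁ hv₁ v₂ hv₂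
  · refine (hφ.norm_rectInc_le_half hT hlam hu₁ hu₂ hv₁ hv₂).trans ?_
    gcongr
    exact le_add_of_nonneg_left (by positivity)

lemma exists_isStrongHolderBiWith_add_two_mul (hT : 0 < T) (hα : 0 ≤ α)
    (hφ : (IsStrongHolderBi T lam φ ∧ α < lam) ∨ (IsHolderBi T lam φ ∧ 2 * α < lam)) :
    ∃ κ > 0, ∃ M, IsStrongHolderBiWith T (α + 2 * κ) M φ := by
  wlog hstrong : IsStrongHolderBi T lam φ ∧ α < lam generalizing lam
  · obtain ⟨hbi, hlam⟩ := hφ.resolve_left hstrong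
    have hhalf : IsStrongHolderBi T (lam / 2) φ ∧ α < lam / 2 :=
      ⟨hbi.isStrongHolderBi_half hT (by linarith), by linarith⟩
    exact this (Or.inl hhalf) hhalf
  obtain ⟨⟨M, hM⟩, hlam⟩ := hstrong
  exact ⟨(lam - α) / 2, by linarith, M, by rwa [mul_div_cancel₀ _ two_ne_zero, add_sub_cancel]⟩

end Holder

section Kernel

variable {T α C κ H δ r s t p x : ℝ} {K K' : ℝ → ℝ → ℝ} {f g : ℝ → E}

lemma CondA.const_nonneg (hT : 0 < T) (hA : CondA T α C K K') : 0 ≤ C := by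
  have norm_deriv_le := (hA.2 (T / 2) T (half_pos hT) (half_lt_self hT) le_rfl).2
  exact nonneg_of_mul_nonneg_left ((abs_nonneg _).trans norm_deriv_le)
    (Real.rpow_pos_of_pos (sub_pos.2 (half_lt_self hT)) _)

lemma CondA.aestronglyMeasurable_deriv (hA : CondA T α C K K') (hr : 0 < r) :
    AEStronglyMeasurable (fun x => K' x r) (volume.restrict (Ioc r T)) := by
  refine (measurable_deriv fun x => K x r).aestronglyMeasurable.congr ?_
  filter_upwards [ae_restrict_mem measurableSet_Ioc] with x hx
  exact (hA.2 r x hr hx.1 hx.2).1.deriv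

lemma CondA.intervalIntegrable_deriv (hA : CondA T α C K K') (hr : 0 < r) (hrs : r < s)
    (hst : s ≤ t) (htT : t ≤ T) : IntervalIntegrable (fun x => K' x r) volume s t := by
  have bound_integrable : IntervalIntegrable (fun x => C * (x - r) ^ (-(α + 1))) volume s t := by
    refine ContinuousOn.intervalIntegrable fun x hx => ContinuousAt.continuousWithinAt ?_
    rw [uIcc_of_le hst] at hx
    exact ((by fun_prop : ContinuousAt (fun x => x - r) x).rpow_const
      (Or.inl (sub_pos.2 (hrs.trans_le hx.1)).ne')).const_mul C
  refine bound_integrable.mono_fun' ?_ ?_ <;> rw [uIoc_of_le hst]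
  · exact (hA.aestronglyMeasurable_deriv hr).mono_measure
      (Measure.restrict_mono (Ioc_subset_Ioc hrs.le htT) le_rfl)
  · filter_upwards [ae_restrict_mem measurableSet_Ioc] with x hx
    exact (hA.2 r x hr (hrs.trans hx.1) (hx.2.trans htT)).2

lemma CondA.integral_deriv (hA : CondA T α C K K') (hr : 0 < r) (hrs : r < s) (hst : s ≤ t)
    (htT : t ≤ T) : ∫ x in s..t, K' x r = K t r - K s r := by
  refine intervalIntegral.integral_eq_sub_of_hasDerivAt (f := fun x => K x r) (fun x hx => ?_)
    (hA.intervalIntegrable_deriv hr hrs hst htT)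
  rw [uIcc_of_le hst] at hx
  exact (hA.2 r x hr (hrs.trans_le hx.1) (hx.2.trans htT)).1

-- The Hölder exponent `α + 2 * κ` exceeds the singularity by `2 * κ`: half of the excess makes the
-- product integrable at `r`, the other half produces the convergence rate `δ ^ κ`.
lemma CondA.norm_deriv_smul_sub_le (hA : CondA T α C K K') (hα : 0 ≤ α) (hκ : 0 ≤ κ)
    (hf : IsHolderWith T (α + 2 * κ) H f) (hr : 0 < r) (hrp : r ≤ p) (hpx : p < x) (hxT : x ≤ T)
    (hδ : x - p ≤ δ) : ‖K' x r • (f x - f p)‖ ≤ C * H * δ ^ κ * (x - r) ^ (κ - 1) := by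
  have hT : 0 < T := by linarith
  have hC := hA.const_nonneg hT
  have hH := hf.nonneg hT
  have hxp : 0 < x - p := sub_pos.2 hpx
  have hxr : 0 < x - r := by linarith
  have hδκ : 0 ≤ δ ^ κ := Real.rpow_nonneg (hxp.le.trans hδ) κ
  have norm_sub_le : ‖f x - f p‖ ≤ H * (δ ^ κ * (x - r) ^ (α + κ)) := by
    refine (hf x ⟨by linarith, hxT⟩ p ⟨by linarith, by linarith⟩).trans ?_
    rw [abs_of_pos hxp, show α + 2 * κ = κ + (α + κ) by ring, Real.rpow_add hxp]
    gcongr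
  calc ‖K' x r • (f x - f p)‖ = |K' x r| * ‖f x - f p‖ := norm_smul _ _
    _ ≤ C * (x - r) ^ (-(α + 1)) * (H * (δ ^ κ * (x - r) ^ (α + κ))) := by
        gcongr
        exact (hA.2 r x hr (hrp.trans_lt hpx) hxT).2
    _ = C * H * δ ^ κ * ((x - r) ^ (-(α + 1)) * (x - r) ^ (α + κ)) := by ring
    _ = C * H * δ ^ κ * (x - r) ^ (κ - 1) := by rw [← Real.rpow_add hxr]; ring_nf

lemma CondA.intervalIntegrable_deriv_smul_sub (hA : CondA T α C K K') (hα : 0 ≤ α) (hκ : 0 < κ)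
    (hf : IsHolderWith T (α + 2 * κ) H f) (hr : 0 < r) (hrp : r ≤ p) (hpt : p ≤ t) (htT : t ≤ T) :
    IntervalIntegrable (fun x => K' x r • (f x - f p)) volume p t := by
  have bound_integrable := (intervalIntegrable_sub_right_rpow (γ := κ - 1) (by linarith) p t
    r).const_mul (C * H * (t - p) ^ κ)
  refine bound_integrable.mono_fun' ?_ ?_ <;> rw [uIoc_of_le hpt]
  · have f_cont : ContinuousOn (fun x => f x - f p) (Ioc p t) :=
      ((hf.continuousOn (by linarith)).mono fun x hx =>
        ⟨by linarith [hx.1], hx.2.trans htT⟩).sub continuousOn_const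
    exact ((hA.aestronglyMeasurable_deriv hr).mono_measure
      (Measure.restrict_mono (Ioc_subset_Ioc hrp htT) le_rfl)).smul
        (f_cont.aestronglyMeasurable measurableSet_Ioc)
  · filter_upwards [ae_restrict_mem measurableSet_Ioc] with x hx
    exact hA.norm_deriv_smul_sub_le hα hκ.le hf hr hrp hx.1 (hx.2.trans htT)
      (sub_le_sub_right hx.2 p)

lemma CondA.norm_integral_deriv_smul_sub_le (hA : CondA T α C K K') (hα : 0 ≤ α) (hκ : 0 < κ)
    (hf : IsHolderWith T (α + 2 * κ) H f) (hr : 0 < r) (hrp : r ≤ p) (hpt : p ≤ t) (htT : t ≤ T)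
    (hδ : t - p ≤ δ) :
    ‖∫ x in p..t, K' x r • (f x - f p)‖ ≤
      C * H * δ ^ κ / κ * ((t - r) ^ κ - (p - r) ^ κ) := by
  have bound_integrable := (intervalIntegrable_sub_right_rpow (γ := κ - 1) (by linarith) p t
    r).const_mul (C * H * δ ^ κ)
  refine (intervalIntegral.norm_integral_le_of_norm_le hpt (.of_forall fun x hx => ?_)
    bound_integrable).trans_eq ?_
  · exact hA.norm_deriv_smul_sub_le hα hκ.le hf hr hrp hx.1 (hx.2.trans htT)
      (by linarith [hx.2])
  · rw [intervalIntegral.integral_const_mul, integral_sub_right_rpow_sub_one hκ]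
    ring

lemma Kstar_sub
    (hf : IntervalIntegrable (fun x => K' x r • (f x - f r)) volume r T)
    (hg : IntervalIntegrable (fun x => K' x r • (g x - g r)) volume r T) :
    Kstar T K K' (fun x => f x - g x) r = Kstar T K K' f r - Kstar T K K' g r := by
  simp only [Kstar, sub_sub_sub_comm (f _) (g _), smul_sub (K' _ r) (f _ - f r),
    intervalIntegral.integral_sub hf hg]
  rw [smul_sub, add_sub_add_comm]

lemma Kstar_sum_smul {ι : Type*} {S : Finset ι} {c : ι → ℝ} {F : ι → ℝ → E}
    (hF : ∀ i ∈ S, IntervalIntegrable (fun x => K' x r • (F i x - F i r)) volume r T) :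
    Kstar T K K' (fun x => ∑ i ∈ S, c i • F i x) r = ∑ i ∈ S, c i • Kstar T K K' (F i) r := by
  have integrand_eq (x : ℝ) : K' x r • (∑ i ∈ S, c i • F i x - ∑ i ∈ S, c i • F i r) =
      ∑ i ∈ S, c i • K' x r • (F i x - F i r) := by
    simp only [← Finset.sum_sub_distrib, ← smul_sub, Finset.smul_sum, smul_comm (K' x r)]
  have terms_integrable (i : ι) (hi : i ∈ S) :
      IntervalIntegrable (fun x => c i • K' x r • (F i x - F i r)) volume r T := (hF i hi).smul _
  simp only [Kstar, integrand_eq, intervalIntegral.integral_finsetSum terms_integrable,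
    intervalIntegral.integral_smul, Finset.smul_sum, smul_add, Finset.sum_add_distrib,
    smul_comm (K T r)]

lemma Kstar_sub_Kstar_eq_rectInc {φ : ℝ → ℝ → E} {u v y : ℝ}
    (hy : IntervalIntegrable (fun x => K' x u • (φ x y - φ u y)) volume u T)
    (hv : IntervalIntegrable (fun x => K' x u • (φ x v - φ u v)) volume u T) :
    Kstar T K K' (fun x => φ x y) u - Kstar T K K' (fun x => φ x v) u =
      K T u • (φ u y - φ u v) + ∫ x in u..T, K' x u • rectInc φ u x v y := by
  simp only [rectInc_eq_sub_left, sub_sub_sub_comm _ _ (φ _ v)]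
  rw [← Kstar_sub hy hv, Kstar]

lemma KstarT_eq_Kstar_Kstar {φ : ℝ → ℝ → E} {u v : ℝ} (hvT : v ≤ T)
    (hleft : ∀ y ∈ Icc v T,
      IntervalIntegrable (fun x => K' x u • (φ x y - φ u y)) volume u T)
    (hright : IntervalIntegrable (fun y => K' y v • (φ u y - φ u v)) volume v T)
    (hKstar : IntervalIntegrable (fun y => K' y v •
      (Kstar T K K' (fun x => φ x y) u - Kstar T K K' (fun x => φ x v) u)) volume v T) :
    KstarT T K K' φ u v = Kstar T K K' (fun y => Kstar T K K' (fun x => φ x y) u) v := by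
  have BK_eq : BK T K' φ u v = (∫ y in v..T, K' y v •
      (Kstar T K K' (fun x => φ x y) u - Kstar T K K' (fun x => φ x v) u)) -
      K T u • AK T K' (fun y => φ u y) v := by
    have scaled_integrable :
        IntervalIntegrable (fun y => K T u • K' y v • (φ u y - φ u v)) volume v T := hright.smul _
    rw [AK, ← intervalIntegral.integral_smul,
      ← intervalIntegral.integral_sub hKstar scaled_integrable]
    refine intervalIntegral.integral_congr fun y hy => ?_
    rw [uIcc_of_le hvT] at hy
    simp only [Kstar_sub_Kstar_eq_rectInc (hleft y hy) (hleft v (left_mem_Icc.2 hvT)), smul_add,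
      smul_comm (K T u), add_sub_cancel_left, mul_comm (K' _ u), mul_smul,
      intervalIntegral.integral_smul]
  have Kstar_eq : Kstar T K K' (fun x => φ x v) u =
      K T u • φ u v + AK T K' (fun x => φ x v) u := rfl
  rw [KstarT, BK_eq, Kstar.eq_def T K K' (fun y => _) v, Kstar_eq]
  module

end Kernel

section StieltjesSum

variable {T α C κ H r : ℝ} {K K' : ℝ → ℝ → ℝ} {f : ℝ → E}

/-- The Riemann–Stieltjes sum of a vector-valued `f` against `g`, with left-endpoint evaluation. -/
def stieltjesSum (P : Partition T) (g : ℝ → ℝ) (f : ℝ → E) : E :=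
  ∑ i ∈ Finset.range P.n, (g (P.pts (i + 1)) - g (P.pts i)) • f (P.pts i)

lemma stieltjesSum_sub (P : Partition T) (g : ℝ → ℝ) (f₁ f₂ : ℝ → E) :
    stieltjesSum P g (fun x => f₁ x - f₂ x) = stieltjesSum P g f₁ - stieltjesSum P g f₂ := by
  simp only [stieltjesSum, smul_sub, Finset.sum_sub_distrib]

lemma IsVolterraKernel.stieltjesSum_eq (hK : IsVolterraKernel K) (P : Partition T) (f : ℝ → E)
    {a : ℕ} (ha : a < P.n) (hr : r ∈ Ico (P.pts a) (P.pts (a + 1))) :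
    stieltjesSum P (fun t => K t r) f = K (P.pts (a + 1)) r • f (P.pts a) +
      ∑ i ∈ Finset.Ico (a + 1) P.n, (K (P.pts (i + 1)) r - K (P.pts i) r) • f (P.pts i) := by
  have kernel_eq_zero {i : ℕ} (hi : i ≤ a) : K (P.pts i) r = 0 :=
    hK.2 _ _ ((P.pts_mono hi ha.le).trans hr.1)
  rw [stieltjesSum, ← Finset.sum_range_add_sum_Ico _ ha, Finset.sum_range_succ,
    Finset.sum_eq_zero fun i hi => ?_, zero_add, kernel_eq_zero le_rfl, sub_zero]
  have hi := Finset.mem_range.1 hi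
  rw [kernel_eq_zero hi, kernel_eq_zero hi.le, sub_zero, zero_smul]

lemma CondA.integral_deriv_smul_sub_eq [CompleteSpace E] {p s t : ℝ} (hA : CondA T α C K K')
    (hr : 0 < r) (hrs : r < s) (hst : s ≤ t) (htT : t ≤ T)
    (hf : IntervalIntegrable (fun x => K' x r • (f x - f s)) volume s t) :
    ∫ x in s..t, K' x r • (f x - f p) =
      (K t r - K s r) • (f s - f p) + ∫ x in s..t, K' x r • (f x - f s) := by
  have deriv_integrable := hA.intervalIntegrable_deriv hr hrs hst htT
  rw [← hA.integral_deriv hr hrs hst htT, ← intervalIntegral.integral_smul_const,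
    ← intervalIntegral.integral_add (deriv_integrable.smul_continuousOn continuousOn_const) hf]
  simp only [← smul_add, sub_add_sub_cancel']

lemma CondA.Kstar_eq_sum [CompleteSpace E] (hA : CondA T α C K K') (hα : 0 ≤ α) (hκ : 0 < κ)
    (hf : IsHolderWith T (α + 2 * κ) H f) (hr : 0 < r) (P : Partition T) {a : ℕ} (ha : a < P.n)
    (hra : r ∈ Ico (P.pts a) (P.pts (a + 1))) :
    Kstar T K K' f r = K (P.pts (a + 1)) r • f r +
      (∫ x in r..P.pts (a + 1), K' x r • (f x - f r)) +
      ∑ i ∈ Finset.Ico (a + 1) P.n, ((K (P.pts (i + 1)) r - K (P.pts i) r) • f (P.pts i) +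
        ∫ x in P.pts i..P.pts (i + 1), K' x r • (f x - f (P.pts i))) := by
  have lt_pts {i : ℕ} (hi : i ∈ Finset.Ico (a + 1) P.n) : r < P.pts i :=
    hra.2.trans_le (P.pts_mono (Finset.mem_Ico.1 hi).1 (Finset.mem_Ico.1 hi).2.le)
  have pts_lt {i : ℕ} (hi : i ∈ Finset.Ico (a + 1) P.n) : P.pts i < P.pts (i + 1) :=
    P.lt i (Finset.mem_Ico.1 hi).2
  have pts_le {i : ℕ} (hi : i ∈ Finset.Ico (a + 1) P.n) : P.pts (i + 1) ≤ T :=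
    (P.pts_mem_Icc (Finset.mem_Ico.1 hi).2).2
  have integrable {x y : ℝ} (hx : r ≤ x) (hxy : x ≤ y) (hy : y ≤ T) :
      IntervalIntegrable (fun x => K' x r • (f x - f r)) volume x y :=
    (hA.intervalIntegrable_deriv_smul_sub hα hκ hf hr le_rfl (hx.trans (hxy.trans hy))
      le_rfl).mono_set (uIcc_subset_uIcc (mem_uIcc_of_le hx (hxy.trans hy))
        (mem_uIcc_of_le (hx.trans hxy) hy))
  have integral_split : ∫ x in r..T, K' x r • (f x - f r) =
      (∫ x in r..P.pts (a + 1), K' x r • (f x - f r)) +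
      ∑ i ∈ Finset.Ico (a + 1) P.n,
        ∫ x in P.pts i..P.pts (i + 1), K' x r • (f x - f r) := by
    rw [intervalIntegral.sum_integral_adjacent_intervals_Ico ha fun i hi =>
        integrable (lt_pts (Finset.mem_Ico.2 hi)).le (pts_lt (Finset.mem_Ico.2 hi)).le
          (pts_le (Finset.mem_Ico.2 hi)), P.last,
      intervalIntegral.integral_add_adjacent_intervals
        (integrable le_rfl hra.2.le (P.pts_mem_Icc ha).2)
        (integrable hra.2.le (P.pts_mem_Icc ha).2 le_rfl)]
  rw [Kstar, integral_split, Finset.sum_congr rfl fun i hi => hA.integral_deriv_smul_sub_eq hr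
    (lt_pts hi) (pts_lt hi).le (pts_le hi) (hA.intervalIntegrable_deriv_smul_sub hα hκ hf hr
      (lt_pts hi).le (pts_lt hi).le (pts_le hi))]
  simp only [smul_sub, Finset.sum_add_distrib, Finset.sum_sub_distrib, ← Finset.sum_smul,
    Finset.sum_Ico_sub (fun i => K (P.pts i) r) ha, P.last]
  module

/-- The factor by which `stieltjesSum P (K · r)` deviates at most from the functional
`f ↦ Kstar T K K' f r` on `(α + 2 * κ)`-Hölder functions; see
`CondA.norm_stieltjesSum_sub_Kstar_le`. -/
def sumErrorBound (P : Partition T) (α κ C r : ℝ) : ℝ :=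
  C * T ^ κ * (1 + 1 / κ) * (1 + r ^ (-α) * P.relGap r ^ (-α)) * P.mesh ^ κ

/-- The norm bound for the functional `f ↦ Kstar T K K' f r` on `(α + 2 * κ)`-Hölder functions;
see `CondA.norm_Kstar_le`. -/
def KstarBound (T α κ C r : ℝ) : ℝ :=
  C * (1 + T ^ κ * T ^ κ / κ) * (1 + r ^ (-α) * (T - r) ^ (-α))

lemma CondA.norm_kernel_smul_sub_le (hA : CondA T α C K K') (hα : 0 ≤ α) (hκ : 0 ≤ κ)
    (hf : IsHolderWith T (α + 2 * κ) H f) (hr : 0 < r) (P : Partition T) {a : ℕ} (ha : a < P.n)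
    (hra : r ∈ Ico (P.pts a) (P.pts (a + 1))) :
    ‖K (P.pts (a + 1)) r • (f (P.pts a) - f r)‖ ≤
      C * H * T ^ κ * P.mesh ^ κ * (r ^ (-α) * P.relGap r ^ (-α)) := by
  have hrT : r < T := hra.2.trans_le (P.pts_mem_Icc ha).2
  have hT : 0 < T := hr.trans hrT
  have hH := hf.nonneg hT
  have hmesh := P.sub_le_mesh ha
  have hgap : 0 < P.pts (a + 1) - P.pts a := sub_pos.2 (P.lt a ha)
  have norm_sub_le : ‖f (P.pts a) - f r‖ ≤
      H * (T ^ κ * P.mesh ^ κ * (P.pts (a + 1) - P.pts a) ^ α) := calc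
    ‖f (P.pts a) - f r‖ ≤ H * |P.pts a - r| ^ (α + 2 * κ) :=
        hf _ (P.pts_mem_Icc ha.le) _ ⟨hr.le, hrT.le⟩
    _ ≤ H * (P.pts (a + 1) - P.pts a) ^ (κ + κ + α) := by
        rw [abs_sub_comm, abs_of_nonneg (sub_nonneg.2 hra.1), ← two_mul, add_comm]
        gcongr
        exacts [sub_nonneg.2 hra.1, hra.2.le]
    _ ≤ H * (T ^ κ * P.mesh ^ κ * (P.pts (a + 1) - P.pts a) ^ α) := by
        rw [Real.rpow_add hgap, Real.rpow_add hgap]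
        gcongr
        exact hmesh.trans P.mesh_le
  have kernel_le := hA.1 r _ hr hra.2 (P.pts_mem_Icc ha).2
  calc ‖K (P.pts (a + 1)) r • (f (P.pts a) - f r)‖
      = |K (P.pts (a + 1)) r| * ‖f (P.pts a) - f r‖ := norm_smul _ _
    _ ≤ C * r ^ (-α) * (P.pts (a + 1) - r) ^ (-α) *
          (H * (T ^ κ * P.mesh ^ κ * (P.pts (a + 1) - P.pts a) ^ α)) := by
        gcongr
        exact (abs_nonneg _).trans kernel_le
    _ = C * H * T ^ κ * P.mesh ^ κ * (r ^ (-α) * P.relGap r ^ (-α)) := by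
        rw [P.relGap_of_mem_Ico ha hra, Real.div_rpow (sub_pos.2 hra.2).le hgap.le,
          Real.rpow_neg hgap.le, div_inv_eq_mul]
        ring

lemma CondA.norm_integral_add_norm_sum_le (hA : CondA T α C K K') (hα : 0 ≤ α) (hκ : 0 < κ)
    (hf : IsHolderWith T (α + 2 * κ) H f) (hr : 0 < r) (P : Partition T) {a : ℕ} (ha : a < P.n)
    (hra : r ∈ Ico (P.pts a) (P.pts (a + 1))) :
    ‖∫ x in r..P.pts (a + 1), K' x r • (f x - f r)‖ +
      ‖∑ i ∈ Finset.Ico (a + 1) P.n,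
        ∫ x in P.pts i..P.pts (i + 1), K' x r • (f x - f (P.pts i))‖ ≤
      C * H * P.mesh ^ κ / κ * T ^ κ := by
  have hrT : r < T := hra.2.trans_le (P.pts_mem_Icc ha).2
  have hT : 0 < T := hr.trans hrT
  have hC := hA.const_nonneg hT
  have hH := hf.nonneg hT
  have hmesh := P.mesh_pos
  have first_le := hA.norm_integral_deriv_smul_sub_le hα hκ hf hr le_rfl hra.2.le
    (P.pts_mem_Icc ha).2 (by linarith [P.sub_le_mesh ha, hra.1] : _ ≤ P.mesh)
  have term_le (i : ℕ) (hi : i ∈ Finset.Ico (a + 1) P.n) :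
      ‖∫ x in P.pts i..P.pts (i + 1), K' x r • (f x - f (P.pts i))‖ ≤
        C * H * P.mesh ^ κ / κ * ((P.pts (i + 1) - r) ^ κ - (P.pts i - r) ^ κ) := by
    obtain ⟨hai, hin⟩ := Finset.mem_Ico.1 hi
    exact hA.norm_integral_deriv_smul_sub_le hα hκ hf hr
      (hra.2.le.trans (P.pts_mono hai hin.le)) (P.lt i hin).le (P.pts_mem_Icc hin).2
      (P.sub_le_mesh hin)
  have sum_le := norm_sum_le_of_le _ term_le
  rw [← Finset.mul_sum, Finset.sum_Ico_sub (fun i => (P.pts i - r) ^ κ) ha, P.last] at sum_le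
  rw [sub_self, Real.zero_rpow hκ.ne'] at first_le
  calc _ ≤ C * H * P.mesh ^ κ / κ * (T - r) ^ κ := by
        linarith
    _ ≤ C * H * P.mesh ^ κ / κ * T ^ κ := by
        gcongr
        linarith

lemma CondA.norm_stieltjesSum_sub_Kstar_le [CompleteSpace E] (hK : IsVolterraKernel K)
    (hA : CondA T α C K K') (hα : 0 ≤ α) (hκ : 0 < κ)
    (hf : IsHolderWith T (α + 2 * κ) H f) (hr : r ∈ Ioo 0 T) (P : Partition T) :
    ‖stieltjesSum P (fun t => K t r) f - Kstar T K K' f r‖ ≤ sumErrorBound P α κ C r * H := by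
  have hT : 0 < T := hr.1.trans hr.2
  have hC := hA.const_nonneg hT
  have hH := hf.nonneg hT
  have hmesh := P.mesh_pos
  have hr0 := hr.1
  have hgap := P.relGap_pos (Ioo_subset_Ico_self hr)
  obtain ⟨a, ha, hra⟩ := P.exists_mem_Ico (Ioo_subset_Ico_self hr)
  have remainder_eq : stieltjesSum P (fun t => K t r) f - Kstar T K K' f r =
      K (P.pts (a + 1)) r • (f (P.pts a) - f r) -
      (∫ x in r..P.pts (a + 1), K' x r • (f x - f r)) -
      ∑ i ∈ Finset.Ico (a + 1) P.n,
        ∫ x in P.pts i..P.pts (i + 1), K' x r • (f x - f (P.pts i)) := by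
    rw [hK.stieltjesSum_eq P f ha hra, hA.Kstar_eq_sum hα hκ hf hr.1 P ha hra,
      Finset.sum_add_distrib]
    module
  rw [remainder_eq]
  calc _ ≤ C * H * T ^ κ * P.mesh ^ κ * (r ^ (-α) * P.relGap r ^ (-α)) +
          C * H * P.mesh ^ κ / κ * T ^ κ := by
        refine (norm_sub_le_of_le (norm_sub_le _ _) le_rfl).trans ?_
        rw [add_assoc]
        exact add_le_add (hA.norm_kernel_smul_sub_le hα hκ.le hf hr.1 P ha hra)
          (hA.norm_integral_add_norm_sum_le hα hκ hf hr.1 P ha hra)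
    _ ≤ C * H * T ^ κ * P.mesh ^ κ * (r ^ (-α) * P.relGap r ^ (-α)) +
          C * H * P.mesh ^ κ / κ * T ^ κ +
          C * H * T ^ κ * P.mesh ^ κ * (1 + r ^ (-α) * P.relGap r ^ (-α) / κ) :=
        le_add_of_nonneg_right (by positivity)
    _ = sumErrorBound P α κ C r * H := by
        rw [sumErrorBound]
        ring

lemma CondA.norm_Kstar_le (hA : CondA T α C K K') (hα : 0 ≤ α) (hκ : 0 < κ)
    (hf : IsHolderWith T (α + 2 * κ) H f) (hr : r ∈ Ioo 0 T) (hfr : ‖f r‖ ≤ H) :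
    ‖Kstar T K K' f r‖ ≤ KstarBound T α κ C r * H := by
  have hT : 0 < T := hr.1.trans hr.2
  have hC := hA.const_nonneg hT
  have hH := hf.nonneg hT
  have hr0 := hr.1
  have hTr : 0 ≤ T - r := sub_nonneg.2 hr.2.le
  have kernel_le := hA.1 r T hr.1 hr.2 le_rfl
  have integral_le := hA.norm_integral_deriv_smul_sub_le hα hκ hf hr.1 le_rfl hr.2.le le_rfl
    (sub_le_self T hr.1.le)
  rw [sub_self, Real.zero_rpow hκ.ne', sub_zero] at integral_le
  calc ‖Kstar T K K' f r‖ ≤ |K T r| * ‖f r‖ + ‖∫ x in r..T, K' x r • (f x - f r)‖ :=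
        (norm_add_le _ _).trans_eq (by rw [norm_smul, Real.norm_eq_abs])
    _ ≤ C * r ^ (-α) * (T - r) ^ (-α) * H + C * H * T ^ κ / κ * T ^ κ := by
        gcongr
        refine integral_le.trans ?_
        gcongr
        exact sub_le_self T hr.1.le
    _ ≤ C * r ^ (-α) * (T - r) ^ (-α) * H + C * H * T ^ κ / κ * T ^ κ +
          C * H * (1 + T ^ κ * T ^ κ / κ * (r ^ (-α) * (T - r) ^ (-α))) :=
        le_add_of_nonneg_right (by positivity)
    _ = KstarBound T α κ C r * H := by
        rw [KstarBound]
        ring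

lemma CondA.norm_stieltjesSum_le [CompleteSpace E] (hK : IsVolterraKernel K)
    (hA : CondA T α C K K') (hα : 0 ≤ α) (hκ : 0 < κ)
    (hf : IsHolderWith T (α + 2 * κ) H f) (hr : r ∈ Ioo 0 T) (hfr : ‖f r‖ ≤ H) (P : Partition T) :
    ‖stieltjesSum P (fun t => K t r) f‖ ≤
      (sumErrorBound P α κ C r + KstarBound T α κ C r) * H := by
  rw [add_mul]
  exact (norm_le_norm_sub_add _ _).trans (add_le_add
    (hA.norm_stieltjesSum_sub_Kstar_le hK hα hκ hf hr P) (hA.norm_Kstar_le hα hκ hf hr hfr))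

end StieltjesSum

section TensorEstimate

variable {T α C κ M r : ℝ} {K K' : ℝ → ℝ → ℝ} {φ : ℝ → ℝ → E}

lemma CondA.isHolderWith_Kstar (hA : CondA T α C K K') (hα : 0 ≤ α) (hκ : 0 < κ)
    (hφ : IsStrongHolderBiWith T (α + 2 * κ) M φ) (hr : r ∈ Ioo 0 T) :
    IsHolderWith T (α + 2 * κ) (KstarBound T α κ C r * M)
      fun y => Kstar T K K' (fun x => φ x y) r := by
  have integrable {y : ℝ} (hy : y ∈ Icc 0 T) :=
    hA.intervalIntegrable_deriv_smul_sub hα hκ (hφ.1.isHolderWith_left hy) hr.1 le_rfl hr.2.le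
      le_rfl
  exact hφ.swap.isHolderWith_apply (A := fun f => Kstar T K K' f r) (Ioo_subset_Icc_self hr)
    (fun _ hy₁ _ hy₂ => Kstar_sub (integrable hy₁) (integrable hy₂))
    fun _ _ hf hfr => hA.norm_Kstar_le hα hκ hf hr hfr

lemma CondA.isHolderWith_stieltjesSum [CompleteSpace E] (hK : IsVolterraKernel K)
    (hA : CondA T α C K K') (hα : 0 ≤ α) (hκ : 0 < κ)
    (hφ : IsStrongHolderBiWith T (α + 2 * κ) M φ) (hr : r ∈ Ioo 0 T) (Q : Partition T) :
    IsHolderWith T (α + 2 * κ) ((sumErrorBound Q α κ C r + KstarBound T α κ C r) * M)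
      fun x => stieltjesSum Q (fun t => K t r) (φ x) :=
  hφ.isHolderWith_apply (A := stieltjesSum Q fun t => K t r) (Ioo_subset_Icc_self hr)
    (fun _ _ _ _ => stieltjesSum_sub Q _ _ _)
    fun _ _ hf hfr => hA.norm_stieltjesSum_le hK hα hκ hf hr hfr Q

lemma CondA.Kstar_stieltjesSum (hA : CondA T α C K K') (hα : 0 ≤ α) (hκ : 0 < κ)
    (hφ : IsHolderBiWith T (α + 2 * κ) M φ) (hr : r ∈ Ioo 0 T) (Q : Partition T) (g : ℝ → ℝ) :
    Kstar T K K' (fun x => stieltjesSum Q g (φ x)) r =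
      stieltjesSum Q g fun y => Kstar T K K' (fun x => φ x y) r :=
  Kstar_sum_smul fun _ hj => hA.intervalIntegrable_deriv_smul_sub hα hκ
    (hφ.isHolderWith_left (Q.pts_mem_Icc (Finset.mem_range.1 hj).le)) hr.1 le_rfl hr.2.le le_rfl

lemma CondA.KstarT_eq (hA : CondA T α C K K') (hα : 0 ≤ α) (hκ : 0 < κ)
    (hφ : IsStrongHolderBiWith T (α + 2 * κ) M φ) (hr : r ∈ Ioo 0 T) :
    KstarT T K K' φ r r = Kstar T K K' (fun y => Kstar T K K' (fun x => φ x y) r) r := by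
  have integrable {f : ℝ → E} {H : ℝ} (hf : IsHolderWith T (α + 2 * κ) H f) :=
    hA.intervalIntegrable_deriv_smul_sub hα hκ hf hr.1 le_rfl hr.2.le le_rfl
  exact KstarT_eq_Kstar_Kstar hr.2.le
    (fun y hy => integrable (hφ.1.isHolderWith_left ⟨hr.1.le.trans hy.1, hy.2⟩))
    (integrable (hφ.1.isHolderWith_right (Ioo_subset_Icc_self hr)))
    (integrable (hA.isHolderWith_Kstar hα hκ hφ hr))

-- With `S P` the Stieltjes sum and `L` the operator `Kstar` at `r`, this is
-- `S P ⊗ S Q - L ⊗ L = (S P - L) ⊗ S Q + L ⊗ (S Q - L)`.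
lemma CondA.norm_stieltjesSum_stieltjesSum_sub_KstarT_le [CompleteSpace E]
    (hK : IsVolterraKernel K) (hA : CondA T α C K K') (hα : 0 ≤ α) (hκ : 0 < κ)
    (hφ : IsStrongHolderBiWith T (α + 2 * κ) M φ) (hr : r ∈ Ioo 0 T) (P Q : Partition T) :
    ‖stieltjesSum P (fun t => K t r) (fun x => stieltjesSum Q (fun t => K t r) (φ x)) -
      KstarT T K K' φ r r‖ ≤
      sumErrorBound P α κ C r * ((sumErrorBound Q α κ C r + KstarBound T α κ C r) * M) +
        sumErrorBound Q α κ C r * (KstarBound T α κ C r * M) := by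
  rw [hA.KstarT_eq hα hκ hφ hr]
  refine (norm_sub_le_norm_sub_add_norm_sub _
    (Kstar T K K' (fun x => stieltjesSum Q (fun t => K t r) (φ x)) r) _).trans (add_le_add ?_ ?_)
  · exact hA.norm_stieltjesSum_sub_Kstar_le hK hα hκ
      (hA.isHolderWith_stieltjesSum hK hα hκ hφ hr Q) hr P
  · rw [hA.Kstar_stieltjesSum hα hκ hφ.1 hr]
    exact hA.norm_stieltjesSum_sub_Kstar_le hK hα hκ (hA.isHolderWith_Kstar hα hκ hφ hr) hr Q

/-- The function of `r` dominating, up to a constant and the mesh rate, the integrand of the error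
of the sum over `P × Q`. Its integral does not depend on `P` and `Q`. -/
def tensorMajorant (P Q : Partition T) (γ r : ℝ) : ℝ :=
  1 + r ^ (-γ) + (T - r) ^ (-γ) + P.relGap r ^ (-γ) + Q.relGap r ^ (-γ)

lemma intervalIntegrable_tensorMajorant {γ : ℝ} (hγ : γ < 1) (P Q : Partition T) :
    IntervalIntegrable (tensorMajorant P Q γ) volume 0 T :=
  (((intervalIntegrable_const.add (intervalIntegral.intervalIntegrable_rpow' (by linarith))).add
    (intervalIntegrable_sub_left_rpow (by linarith) 0 T T)).add
    (P.intervalIntegrable_relGap_rpow hγ)).add (Q.intervalIntegrable_relGap_rpow hγ)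

lemma integral_tensorMajorant {γ : ℝ} (hγ : γ < 1) (P Q : Partition T) :
    ∫ r in 0..T, tensorMajorant P Q γ r = T + 2 * (T ^ (1 - γ) + T) / (1 - γ) := by
  have left_integrable : IntervalIntegrable (fun r : ℝ => r ^ (-γ)) volume 0 T :=
    intervalIntegral.intervalIntegrable_rpow' (by linarith)
  have right_integrable := intervalIntegrable_sub_left_rpow (γ := -γ) (by linarith) 0 T T
  have integral_left : ∫ r in 0..T, r ^ (-γ) = T ^ (1 - γ) / (1 - γ) := by
    rw [integral_rpow (Or.inl (by linarith)), neg_add_eq_sub, Real.zero_rpow (by linarith),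
      sub_zero]
  simp only [tensorMajorant]
  rw [intervalIntegral.integral_add (((intervalIntegrable_const.add left_integrable).add
      right_integrable).add (P.intervalIntegrable_relGap_rpow hγ))
      (Q.intervalIntegrable_relGap_rpow hγ),
    intervalIntegral.integral_add ((intervalIntegrable_const.add left_integrable).add
      right_integrable) (P.intervalIntegrable_relGap_rpow hγ),
    intervalIntegral.integral_add (intervalIntegrable_const.add left_integrable) right_integrable,
    intervalIntegral.integral_add intervalIntegrable_const left_integrable, integral_left,
    integral_sub_left_rpow_neg hγ, P.integral_relGap_rpow hγ, Q.integral_relGap_rpow hγ,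
    intervalIntegral.integral_const, smul_eq_mul, mul_one, sub_zero]
  ring

lemma rpow_neg_mul_rpow_neg_sq_le {x y : ℝ} (hx : 0 ≤ x) (hy : 0 ≤ y) (α : ℝ) :
    (x ^ (-α) * y ^ (-α)) ^ 2 ≤ x ^ (-(4 * α)) + y ^ (-(4 * α)) := by
  have pow_four {z : ℝ} (hz : 0 ≤ z) : z ^ (-(4 * α)) = ((z ^ (-α)) ^ 2) ^ 2 := by
    rw [← pow_mul, ← Real.rpow_mul_natCast hz]
    congr 1
    push_cast
    ring
  rw [pow_four hx, pow_four hy, mul_pow]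
  nlinarith [sq_nonneg ((x ^ (-α)) ^ 2 - (y ^ (-α)) ^ 2), sq_nonneg ((x ^ (-α)) ^ 2),
    sq_nonneg ((y ^ (-α)) ^ 2)]

lemma one_add_rpow_mul_rpow_sq_le {x y : ℝ} (hx : 0 ≤ x) (hy : 0 ≤ y) (α : ℝ) :
    (1 + x ^ (-α) * y ^ (-α)) ^ 2 ≤ 2 * (1 + x ^ (-(4 * α)) + y ^ (-(4 * α))) := by
  linarith [add_sq_le (a := 1) (b := x ^ (-α) * y ^ (-α)), rpow_neg_mul_rpow_neg_sq_le hx hy α]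

lemma sum_sq_one_add_le_tensorMajorant (hr : r ∈ Ico 0 T) (P Q : Partition T) :
    (1 + r ^ (-α) * P.relGap r ^ (-α)) ^ 2 + (1 + r ^ (-α) * Q.relGap r ^ (-α)) ^ 2 +
      (1 + r ^ (-α) * (T - r) ^ (-α)) ^ 2 ≤ 6 * tensorMajorant P Q (4 * α) r := by
  have hr0 := hr.1
  have hTr : 0 ≤ T - r := sub_nonneg.2 hr.2.le
  have hP := (P.relGap_pos hr).le
  have hQ := (Q.relGap_pos hr).le
  have hP' := Real.rpow_nonneg hP (-(4 * α))
  have hQ' := Real.rpow_nonneg hQ (-(4 * α))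
  have hTr' := Real.rpow_nonneg hTr (-(4 * α))
  rw [tensorMajorant]
  linarith [one_add_rpow_mul_rpow_sq_le hr0 hP α, one_add_rpow_mul_rpow_sq_le hr0 hQ α,
    one_add_rpow_mul_rpow_sq_le hr0 hTr α]

/-- The constant in the rate of convergence of the Stieltjes sums, up to the Hölder constant of the
integrand; see `CondA.norm_stieltjesSum_stieltjesSum_sub_KstarT_le_tensorMajorant`. -/
def rateConst (T κ C : ℝ) : ℝ :=
  6 * (C * T ^ κ * (1 + 1 / κ)) *
    (C * T ^ κ * (1 + 1 / κ) * T ^ κ + 2 * (C * (1 + T ^ κ * T ^ κ / κ)))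

lemma mul_add_mul_add_mul_le_sum_sq {a b : ℝ} (ha : 0 ≤ a) (hb : 0 ≤ b) (x y z : ℝ) :
    a * (x * y) + b * (x * z) + b * (y * z) ≤ (a + 2 * b) * (x ^ 2 + y ^ 2 + z ^ 2) := by
  have hxy : x * y ≤ x ^ 2 + y ^ 2 + z ^ 2 := by nlinarith [sq_nonneg (x - y)]
  have hxz : x * z ≤ x ^ 2 + y ^ 2 + z ^ 2 := by nlinarith [sq_nonneg (x - z)]
  have hyz : y * z ≤ x ^ 2 + y ^ 2 + z ^ 2 := by nlinarith [sq_nonneg (y - z)]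
  linarith [mul_le_mul_of_nonneg_left hxy ha, mul_le_mul_of_nonneg_left hxz hb,
    mul_le_mul_of_nonneg_left hyz hb]

lemma error_mul_add_mul_le {a b x y z p q m t : ℝ} (ha : 0 ≤ a) (hb : 0 ≤ b) (hx : 0 ≤ x)
    (hy : 0 ≤ y) (hz : 0 ≤ z) (hp : 0 ≤ p) (hq : 0 ≤ q) (hpm : p ≤ m) (hqm : q ≤ m)
    (hqt : q ≤ t) :
    a * x * p * (a * y * q + b * z) + a * y * q * (b * z) ≤
      a * m * ((a * t + 2 * b) * (x ^ 2 + y ^ 2 + z ^ 2)) := by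
  have hm : 0 ≤ m := hp.trans hpm
  have ht : 0 ≤ t := hq.trans hqt
  calc a * x * p * (a * y * q + b * z) + a * y * q * (b * z)
      ≤ a * x * m * (a * y * t + b * z) + a * y * m * (b * z) := by gcongr
    _ = a * m * (a * t * (x * y) + b * (x * z) + b * (y * z)) := by ring
    _ ≤ a * m * ((a * t + 2 * b) * (x ^ 2 + y ^ 2 + z ^ 2)) := by
        gcongr
        exact mul_add_mul_add_mul_le_sum_sq (by positivity) hb x y z

lemma sumErrorBound_mul_add_mul_le_tensorMajorant (hC : 0 ≤ C) (hκ : 0 < κ) (hr : r ∈ Ico 0 T)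
    (P Q : Partition T) :
    sumErrorBound P α κ C r * (sumErrorBound Q α κ C r + KstarBound T α κ C r) +
        sumErrorBound Q α κ C r * KstarBound T α κ C r ≤
      rateConst T κ C * max P.mesh Q.mesh ^ κ * tensorMajorant P Q (4 * α) r := by
  have hT : 0 < T := hr.1.trans_lt hr.2
  have hr0 := hr.1
  have hTr : 0 ≤ T - r := sub_nonneg.2 hr.2.le
  have hP := (P.relGap_pos hr).le
  have hQ := (Q.relGap_pos hr).le
  have hPm := P.mesh_pos
  have hQm := Q.mesh_pos
  refine (error_mul_add_mul_le (m := max P.mesh Q.mesh ^ κ) (t := T ^ κ) (by positivity)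
    (by positivity) (by positivity) (by positivity) (by positivity) (by positivity)
    (by positivity) ?_ ?_ ?_).trans ?_
  · gcongr
    exact le_max_left _ _
  · gcongr
    exact le_max_right _ _
  · gcongr
    exact Q.mesh_le
  · refine (mul_le_mul_of_nonneg_left (mul_le_mul_of_nonneg_left
      (sum_sq_one_add_le_tensorMajorant hr P Q) (by positivity)) (by positivity)).trans_eq ?_
    rw [rateConst]
    ring

lemma CondA.norm_stieltjesSum_stieltjesSum_sub_KstarT_le_tensorMajorant [CompleteSpace E]
    (hK : IsVolterraKernel K) (hA : CondA T α C K K') (hα : 0 ≤ α) (hκ : 0 < κ)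
    (hφ : IsStrongHolderBiWith T (α + 2 * κ) M φ) (hr : r ∈ Ioo 0 T) (P Q : Partition T) :
    ‖stieltjesSum P (fun t => K t r) (fun x => stieltjesSum Q (fun t => K t r) (φ x)) -
      KstarT T K K' φ r r‖ ≤
      rateConst T κ C * max P.mesh Q.mesh ^ κ * tensorMajorant P Q (4 * α) r * M := by
  have hT : 0 < T := hr.1.trans hr.2
  refine (hA.norm_stieltjesSum_stieltjesSum_sub_KstarT_le hK hα hκ hφ hr P Q).trans ?_
  rw [← mul_assoc, ← mul_assoc, ← add_mul]
  exact mul_le_mul_of_nonneg_right (sumErrorBound_mul_add_mul_le_tensorMajorant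
    (hA.const_nonneg hT) hκ (Ioo_subset_Ico_self hr) P Q) (hφ.1.nonneg hT)

end TensorEstimate

section DoubleSum

variable {T a b : ℝ} {g : ℝ → ℝ → ℝ → ℝ}

/-- The two-dimensional Riemann–Stieltjes sum of a vector-valued `φ` against `g` over the grid
partition `P × Q`, with evaluation at the lower left corners. -/
def stieltjesSum₂ (P Q : Partition T) (φ : ℝ → ℝ → E) (g : ℝ → ℝ → ℝ) : E :=
  ∑ i ∈ Finset.range P.n, ∑ j ∈ Finset.range Q.n,
    rectInc g (P.pts i) (P.pts (i + 1)) (Q.pts j) (Q.pts (j + 1)) • φ (P.pts i) (Q.pts j)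

lemma stieltjesSum₂_eq_RSsum (P Q : Partition T) (φ g : ℝ → ℝ → ℝ) :
    stieltjesSum₂ P Q φ g = RSsum P Q φ g := by
  simp only [stieltjesSum₂, RSsum, smul_eq_mul, mul_comm]

lemma stieltjesSum_stieltjesSum (P Q : Partition T) (φ : ℝ → ℝ → E) (g h : ℝ → ℝ) :
    stieltjesSum P g (fun x => stieltjesSum Q h (φ x)) =
      stieltjesSum₂ P Q φ fun s t => h t * g s := by
  simp only [stieltjesSum, stieltjesSum₂, Finset.smul_sum, smul_smul]
  refine Finset.sum_congr rfl fun i _ => Finset.sum_congr rfl fun j _ => ?_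
  rw [rectInc]
  congr 1
  ring

lemma stieltjesSum₂_congr {g h : ℝ → ℝ → ℝ} (hgh : ∀ s ∈ Icc 0 T, ∀ t ∈ Icc 0 T, g s t = h s t)
    (P Q : Partition T) (φ : ℝ → ℝ → E) : stieltjesSum₂ P Q φ g = stieltjesSum₂ P Q φ h := by
  refine Finset.sum_congr rfl fun i hi => Finset.sum_congr rfl fun j hj => ?_
  have hi := Finset.mem_range.1 hi
  have hj := Finset.mem_range.1 hj
  simp only [rectInc, hgh _ (P.pts_mem_Icc hi.le) _ (Q.pts_mem_Icc hj.le),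
    hgh _ (P.pts_mem_Icc hi) _ (Q.pts_mem_Icc hj), hgh _ (P.pts_mem_Icc hi.le) _ (Q.pts_mem_Icc hj),
    hgh _ (P.pts_mem_Icc hi) _ (Q.pts_mem_Icc hj.le)]

lemma intervalIntegrable_rectInc_smul
    (hg : ∀ s ∈ Icc 0 T, ∀ t ∈ Icc 0 T, IntervalIntegrable (fun r => g r s t) volume a b)
    (φ : ℝ → ℝ → E) {P Q : Partition T} {i j : ℕ} (hi : i ∈ Finset.range P.n)
    (hj : j ∈ Finset.range Q.n) :
    IntervalIntegrable (fun r =>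
      rectInc (g r) (P.pts i) (P.pts (i + 1)) (Q.pts j) (Q.pts (j + 1)) •
        φ (P.pts i) (Q.pts j)) volume a b := by
  have hi := Finset.mem_range.1 hi
  have hj := Finset.mem_range.1 hj
  exact ((((hg _ (P.pts_mem_Icc hi.le) _ (Q.pts_mem_Icc hj.le)).add
    (hg _ (P.pts_mem_Icc hi) _ (Q.pts_mem_Icc hj))).sub
    (hg _ (P.pts_mem_Icc hi.le) _ (Q.pts_mem_Icc hj))).sub
    (hg _ (P.pts_mem_Icc hi) _ (Q.pts_mem_Icc hj.le))).smul_continuousOn continuousOn_const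

lemma intervalIntegrable_stieltjesSum₂
    (hg : ∀ s ∈ Icc 0 T, ∀ t ∈ Icc 0 T, IntervalIntegrable (fun r => g r s t) volume a b)
    (P Q : Partition T) (φ : ℝ → ℝ → E) :
    IntervalIntegrable (fun r => stieltjesSum₂ P Q φ (g r)) volume a b := by
  have sum_integrable := IntervalIntegrable.sum (Finset.range P.n) fun i hi =>
    IntervalIntegrable.sum (Finset.range Q.n) fun j hj =>
      intervalIntegrable_rectInc_smul hg φ hi hj
  refine sum_integrable.congr fun r _ => ?_
  simp only [stieltjesSum₂, Finset.sum_apply]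

lemma integral_rectInc {u₁ u₂ v₁ v₂ : ℝ} (hu₁ : u₁ ∈ Icc 0 T) (hu₂ : u₂ ∈ Icc 0 T)
    (hv₁ : v₁ ∈ Icc 0 T) (hv₂ : v₂ ∈ Icc 0 T)
    (hg : ∀ s ∈ Icc 0 T, ∀ t ∈ Icc 0 T, IntervalIntegrable (fun r => g r s t) volume a b) :
    ∫ r in a..b, rectInc (g r) u₁ u₂ v₁ v₂ =
      rectInc (fun s t => ∫ r in a..b, g r s t) u₁ u₂ v₁ v₂ := by
  have h₁₁ := hg _ hu₁ _ hv₁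
  have h₁₂ := hg _ hu₁ _ hv₂
  have h₂₁ := hg _ hu₂ _ hv₁
  have h₂₂ := hg _ hu₂ _ hv₂
  simp only [rectInc]
  rw [intervalIntegral.integral_sub ((h₁₁.add h₂₂).sub h₁₂) h₂₁,
    intervalIntegral.integral_sub (h₁₁.add h₂₂) h₁₂, intervalIntegral.integral_add h₁₁ h₂₂]

lemma integral_stieltjesSum₂ [CompleteSpace E]
    (hg : ∀ s ∈ Icc 0 T, ∀ t ∈ Icc 0 T, IntervalIntegrable (fun r => g r s t) volume a b)
    (P Q : Partition T) (φ : ℝ → ℝ → E) :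
    ∫ r in a..b, stieltjesSum₂ P Q φ (g r) =
      stieltjesSum₂ P Q φ fun s t => ∫ r in a..b, g r s t := by
  have integrable {i : ℕ} (hi : i ∈ Finset.range P.n) {j : ℕ} (hj : j ∈ Finset.range Q.n) :=
    intervalIntegrable_rectInc_smul hg φ hi hj
  simp only [stieltjesSum₂]
  rw [intervalIntegral.integral_finsetSum fun i hi => by
    simpa only [Finset.sum_fn] using IntervalIntegrable.sum _ fun j hj => integrable hi hj]
  refine Finset.sum_congr rfl fun i hi => ?_
  rw [intervalIntegral.integral_finsetSum fun j hj => integrable hi hj]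
  refine Finset.sum_congr rfl fun j hj => ?_
  have hi := Finset.mem_range.1 hi
  have hj := Finset.mem_range.1 hj
  rw [intervalIntegral.integral_smul_const, integral_rectInc (P.pts_mem_Icc hi.le)
    (P.pts_mem_Icc hi) (Q.pts_mem_Icc hj.le) (Q.pts_mem_Icc hj) hg]

end DoubleSum

section Covariance

variable {T α C : ℝ} {K K' : ℝ → ℝ → ℝ}

lemma CondA.norm_kernel_sq_le (hK : IsVolterraKernel K) (hA : CondA T α C K K') {t r : ℝ}
    (htT : t ≤ T) (hr : 0 < r) :
    ‖K t r ^ 2‖ ≤ C ^ 2 * (r ^ (-(4 * α)) + ‖(t - r) ^ (-(4 * α))‖) := by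
  rcases le_or_gt t r with htr | hrt
  · rw [hK.2 t r htr, zero_pow two_ne_zero, norm_zero]
    positivity
  · calc ‖K t r ^ 2‖ = |K t r| ^ 2 := by rw [norm_pow, Real.norm_eq_abs]
      _ ≤ (C * r ^ (-α) * (t - r) ^ (-α)) ^ 2 := by
          gcongr
          exact hA.1 r t hr hrt htT
      _ = C ^ 2 * (r ^ (-α) * (t - r) ^ (-α)) ^ 2 := by ring
      _ ≤ C ^ 2 * (r ^ (-(4 * α)) + ‖(t - r) ^ (-(4 * α))‖) := by
          gcongr
          exact (rpow_neg_mul_rpow_neg_sq_le hr.le (sub_nonneg.2 hrt.le) α).trans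
            (add_le_add_right (Real.le_norm_self _) _)

lemma CondA.memLp_kernel (hK : IsVolterraKernel K) (hA : CondA T α C K K') (hα : α < 1 / 4)
    {t : ℝ} (ht : t ∈ Icc 0 T) : MemLp (K t) 2 (volume.restrict (Ioc 0 T)) := by
  have measurable_kernel : Measurable (K t) :=
    hK.1.comp (measurable_const.prodMk measurable_id)
  have left_integrable : IntervalIntegrable (fun r : ℝ => r ^ (-(4 * α))) volume 0 T :=
    intervalIntegral.intervalIntegrable_rpow' (by linarith)
  have right_integrable := intervalIntegrable_sub_left_rpow (γ := -(4 * α)) (by linarith) 0 T t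
  have majorant_integrable := (left_integrable.add right_integrable.norm).const_mul (C ^ 2)
  rw [intervalIntegrable_iff_integrableOn_Ioc_of_le (ht.1.trans ht.2)] at majorant_integrable
  rw [memLp_two_iff_integrable_sq measurable_kernel.aestronglyMeasurable]
  refine majorant_integrable.mono' (measurable_kernel.pow_const 2).aestronglyMeasurable ?_
  filter_upwards [ae_restrict_mem measurableSet_Ioc] with r hr
  exact hA.norm_kernel_sq_le hK ht.2 hr.1

lemma CondA.intervalIntegrable_kernel_mul_kernel (hK : IsVolterraKernel K)
    (hA : CondA T α C K K') (hα : α < 1 / 4) {s t : ℝ} (hs : s ∈ Icc 0 T) (ht : t ∈ Icc 0 T) :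
    IntervalIntegrable (fun r => K t r * K s r) volume 0 T := by
  rw [intervalIntegrable_iff_integrableOn_Ioc_of_le (hs.1.trans hs.2)]
  exact (hA.memLp_kernel hK hα ht).integrable_mul (hA.memLp_kernel hK hα hs)

lemma CondA.covR_eq (hK : IsVolterraKernel K) (hA : CondA T α C K K') (hα : α < 1 / 4)
    {s t : ℝ} (hs : s ∈ Icc 0 T) (ht : t ∈ Icc 0 T) :
    covR K s t = ∫ r in 0..T, K t r * K s r := by
  have min_nonneg : 0 ≤ min s t := le_min hs.1 ht.1
  have min_le : min s t ≤ T := (min_le_left _ _).trans hs.2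
  have integrable := hA.intervalIntegrable_kernel_mul_kernel hK hα hs ht
  have tail_eq_zero : ∫ r in min s t..T, K t r * K s r = 0 := by
    refine intervalIntegral.integral_zero_ae (.of_forall fun r hr => ?_)
    rw [uIoc_of_le min_le] at hr
    rcases min_lt_iff.1 hr.1 with hsr | htr
    · rw [hK.2 s r hsr.le, mul_zero]
    · rw [hK.2 t r htr.le, zero_mul]
  have min_mem : min s t ∈ uIcc 0 T := mem_uIcc_of_le min_nonneg min_le
  rw [covR, ← intervalIntegral.integral_add_adjacent_intervals
    (integrable.mono_set (uIcc_subset_uIcc_left min_mem))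
    (integrable.mono_set (uIcc_subset_uIcc_right min_mem)), tail_eq_zero, add_zero]

lemma CondA.intervalIntegrable_stieltjesSum_stieltjesSum (hK : IsVolterraKernel K)
    (hA : CondA T α C K K') (hα : α < 1 / 4) (P Q : Partition T) (φ : ℝ → ℝ → E) :
    IntervalIntegrable (fun r => stieltjesSum P (fun t => K t r) fun x =>
      stieltjesSum Q (fun t => K t r) (φ x)) volume 0 T := by
  simp only [stieltjesSum_stieltjesSum]
  exact intervalIntegrable_stieltjesSum₂
    (fun _ hs _ ht => hA.intervalIntegrable_kernel_mul_kernel hK hα hs ht) P Q φ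

lemma CondA.stieltjesSum₂_covR [CompleteSpace E] (hK : IsVolterraKernel K)
    (hA : CondA T α C K K') (hα : α < 1 / 4) (P Q : Partition T) (φ : ℝ → ℝ → E) :
    stieltjesSum₂ P Q φ (covR K) = ∫ r in 0..T, stieltjesSum P (fun t => K t r) fun x =>
      stieltjesSum Q (fun t => K t r) (φ x) := by
  simp only [stieltjesSum_stieltjesSum]
  rw [integral_stieltjesSum₂ fun _ hs _ ht => hA.intervalIntegrable_kernel_mul_kernel hK hα hs ht]
  exact stieltjesSum₂_congr (fun _ hs _ ht => hA.covR_eq hK hα hs ht) P Q φ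

end Covariance

section YoungIntegral

variable {T α κ C M lam : ℝ} {K K' : ℝ → ℝ → ℝ} {φ : ℝ → ℝ → E}

-- `F` is measurable since a subsequence of `S` converges to it almost everywhere.
lemma integrable_of_ae_norm_sub_le {Ω F : Type*} [MeasurableSpace Ω] [NormedAddCommGroup F]
    {μ : Measure Ω} {f : Ω → F} {S : ℕ → Ω → F} {G : ℕ → Ω → ℝ} (hS : ∀ n, Integrable (S n) μ)
    (hG : ∀ n, Integrable (G n) μ) (hSG : ∀ n, ∀ᵐ x ∂μ, ‖S n x - f x‖ ≤ G n x)
    (hlim : Tendsto (fun n => ∫ x, G n x ∂μ) atTop (𝓝 0)) : Integrable f μ := by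
  have eLpNorm_eq (n : ℕ) : eLpNorm (G n - 0) 1 μ = ENNReal.ofReal (∫ x, G n x ∂μ) := by
    have nonneg : 0 ≤ᵐ[μ] G n := (hSG n).mono fun x hx => (norm_nonneg _).trans hx
    rw [sub_zero, eLpNorm_one_eq_lintegral_enorm,
      ofReal_integral_eq_lintegral_ofReal (hG n) nonneg]
    exact lintegral_congr_ae (nonneg.mono fun x hx => Real.enorm_eq_ofReal hx)
  have tendsto_eLpNorm : Tendsto (fun n => eLpNorm (G n - 0) 1 μ) atTop (𝓝 0) := by
    simpa only [eLpNorm_eq, ENNReal.ofReal_zero] using ENNReal.tendsto_ofReal hlim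
  obtain ⟨k, -, tendsto_ae⟩ := (tendstoInMeasure_of_tendsto_eLpNorm one_ne_zero
    (fun n => (hG n).aestronglyMeasurable) aestronglyMeasurable_zero
    tendsto_eLpNorm).exists_seq_tendsto_ae
  have measurable_f : AEStronglyMeasurable f μ := by
    refine aestronglyMeasurable_of_tendsto_ae atTop
      (fun n => (hS (k n)).aestronglyMeasurable) ?_
    filter_upwards [tendsto_ae, ae_all_iff.2 hSG] with x hx hle
    exact tendsto_iff_norm_sub_tendsto_zero.2
      (squeeze_zero (fun _ => norm_nonneg _) (fun n => hle (k n)) hx)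
  have integrable_sub : Integrable (S 0 - f) μ :=
    (hG 0).mono' ((hS 0).aestronglyMeasurable.sub measurable_f) (hSG 0)
  simpa only [sub_sub_cancel] using (hS 0).sub integrable_sub

lemma CondA.intervalIntegrable_KstarT_diag [CompleteSpace E] (hT : 0 < T) (hα : 0 ≤ α)
    (hα' : α < 1 / 4) (hκ : 0 < κ) (hK : IsVolterraKernel K) (hA : CondA T α C K K')
    (hφ : IsStrongHolderBiWith T (α + 2 * κ) M φ) :
    IntervalIntegrable (fun r => KstarT T K K' φ r r) volume 0 T := by
  let P (N : ℕ) : Partition T := .uniform hT N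
  let G (N : ℕ) (r : ℝ) : ℝ := rateConst T κ C * max (P N).mesh (P N).mesh ^ κ *
    tensorMajorant (P N) (P N) (4 * α) r * M
  have integral_G (N : ℕ) : ∫ r in 0..T, G N r = rateConst T κ C * (P N).mesh ^ κ *
      (T + 2 * (T ^ (1 - 4 * α) + T) / (1 - 4 * α)) * M := by
    simp only [G, max_self]
    rw [intervalIntegral.integral_mul_const, intervalIntegral.integral_const_mul,
      integral_tensorMajorant (by linarith)]
  have tendsto_rate : Tendsto (fun N => (P N).mesh ^ κ) atTop (𝓝 0) := by
    simpa only [Real.zero_rpow hκ.ne'] using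
      (Partition.tendsto_mesh_uniform hT).rpow_const (Or.inr hκ.le)
  have tendsto_integral : Tendsto (fun N => ∫ r in 0..T, G N r) atTop (𝓝 0) := by
    simpa only [integral_G, mul_zero, zero_mul] using
      ((tendsto_rate.const_mul (rateConst T κ C)).mul_const _).mul_const M
  simp only [intervalIntegral.integral_of_le hT.le] at tendsto_integral
  rw [intervalIntegrable_iff_integrableOn_Ioc_of_le hT.le]
  refine integrable_of_ae_norm_sub_le
    (fun N => (intervalIntegrable_iff_integrableOn_Ioc_of_le hT.le).1
      (hA.intervalIntegrable_stieltjesSum_stieltjesSum hK hα' (P N) (P N) φ))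
    (fun N => (intervalIntegrable_iff_integrableOn_Ioc_of_le hT.le).1
      (((intervalIntegrable_tensorMajorant (by linarith) _ _).const_mul _).mul_const M))
    (fun N => ?_) tendsto_integral
  rw [← restrict_Ioo_eq_restrict_Ioc]
  filter_upwards [ae_restrict_mem measurableSet_Ioo] with r hr
  exact hA.norm_stieltjesSum_stieltjesSum_sub_KstarT_le_tensorMajorant hK hα hκ hφ hr (P N) (P N)

lemma CondA.norm_stieltjesSum₂_covR_sub_integral_le [CompleteSpace E] (hT : 0 < T) (hα : 0 ≤ α)
    (hα' : α < 1 / 4) (hκ : 0 < κ) (hK : IsVolterraKernel K) (hA : CondA T α C K K')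
    (hφ : IsStrongHolderBiWith T (α + 2 * κ) M φ) (P Q : Partition T) :
    ‖stieltjesSum₂ P Q φ (covR K) - ∫ r in 0..T, KstarT T K K' φ r r‖ ≤
      rateConst T κ C * max P.mesh Q.mesh ^ κ *
        (T + 2 * (T ^ (1 - 4 * α) + T) / (1 - 4 * α)) * M := by
  have hα₄ : 4 * α < 1 := by linarith
  rw [hA.stieltjesSum₂_covR hK hα', ← intervalIntegral.integral_sub
      (hA.intervalIntegrable_stieltjesSum_stieltjesSum hK hα' P Q φ)
      (hA.intervalIntegrable_KstarT_diag hT hα hα' hκ hK hφ),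
    ← integral_tensorMajorant hα₄ P Q, ← intervalIntegral.integral_const_mul,
    ← intervalIntegral.integral_mul_const]
  refine intervalIntegral.norm_integral_le_of_norm_le hT.le ?_
    (((intervalIntegrable_tensorMajorant hα₄ P Q).const_mul _).mul_const M)
  filter_upwards [compl_mem_ae_iff.2 (measure_singleton T)] with r hrT hr
  exact hA.norm_stieltjesSum_stieltjesSum_sub_KstarT_le_tensorMajorant hK hα hκ hφ
    ⟨hr.1, hr.2.lt_of_ne hrT⟩ P Q

/-- The two-dimensional Young–Stieltjes integral of a vector-valued `φ` against `g` over `[0,T]²`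
exists and equals `I`, as a limit of Riemann–Stieltjes sums over grids whose mesh tends to `0`. -/
def HasYoungIntegral (T : ℝ) (φ : ℝ → ℝ → E) (g : ℝ → ℝ → ℝ) (I : E) : Prop :=
  ∀ ε > 0, ∃ δ > 0, ∀ P Q : Partition T, max P.mesh Q.mesh < δ →
    ‖stieltjesSum₂ P Q φ g - I‖ < ε

lemma HasYoungIntegral.of_norm_sub_le {g : ℝ → ℝ → ℝ} {I : E} {B : ℝ} (hκ : 0 < κ)
    (h : ∀ P Q : Partition T, ‖stieltjesSum₂ P Q φ g - I‖ ≤ B * max P.mesh Q.mesh ^ κ) :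
    HasYoungIntegral T φ g I := by
  have tendsto_rate : Tendsto (fun x : ℝ => B * x ^ κ) (𝓝 0) (𝓝 0) := by
    simpa only [Real.zero_rpow hκ.ne', mul_zero] using
      ((Real.continuousAt_rpow_const 0 κ (Or.inr hκ.le)).tendsto.const_mul B)
  intro ε hε
  obtain ⟨δ, hδ, rate_lt⟩ := Metric.eventually_nhds_iff.1 (tendsto_rate.eventually_lt_const hε)
  refine ⟨δ, hδ, fun P Q hPQ => (h P Q).trans_lt (rate_lt ?_)⟩
  rwa [Real.dist_0_eq_abs, abs_of_pos (P.mesh_pos.trans_le (le_max_left _ _))]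

lemma CondA.hasYoungIntegral_covR [CompleteSpace E] (hT : 0 < T) (hα : 0 ≤ α)
    (hα' : α < 1 / 4) (hκ : 0 < κ) (hK : IsVolterraKernel K) (hA : CondA T α C K K')
    (hφ : IsStrongHolderBiWith T (α + 2 * κ) M φ) :
    HasYoungIntegral T φ (covR K) (∫ r in 0..T, KstarT T K K' φ r r) :=
  .of_norm_sub_le
    (B := rateConst T κ C * (T + 2 * (T ^ (1 - 4 * α) + T) / (1 - 4 * α)) * M) hκ fun P Q =>
    (hA.norm_stieltjesSum₂_covR_sub_integral_le hT hα hα' hκ hK hφ P Q).trans_eq (by ring)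

theorem youngIntegral_covR_exists_general [CompleteSpace E] (hT : 0 < T) (hα : 0 ≤ α)
    (hα' : α < 1 / 4) (hK : IsVolterraKernel K) (hA : ∃ C : ℝ, CondA T α C K K')
    (hφ : (IsStrongHolderBi T lam φ ∧ α < lam) ∨ (IsHolderBi T lam φ ∧ 2 * α < lam)) :
    IntervalIntegrable (fun r => KstarT T K K' φ r r) volume 0 T ∧
      HasYoungIntegral T φ (covR K) (∫ r in 0..T, KstarT T K K' φ r r) := by
  obtain ⟨C, hA⟩ := hA
  obtain ⟨κ, hκ, M, hφ⟩ := exists_isStrongHolderBiWith_add_two_mul hT hα hφ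
  exact ⟨hA.intervalIntegrable_KstarT_diag hT hα hα' hκ hK hφ,
    hA.hasYoungIntegral_covR hT hα hα' hκ hK hφ⟩

end YoungIntegral

/-- Proposition 4.3: existence of the 2D Young–Stieltjes integral
`∫_{[0,T]²} φ dR` and its identification with `∫_0^T (𝒦*⊗𝒦*)φ(r,r) dr`. -/
theorem youngIntegral_covR_exists (T α lam : ℝ) (hT : 0 < T) (hα : 0 ≤ α) (hα' : α < 1 / 4)
    (K K' : ℝ → ℝ → ℝ) (hK : IsVolterraKernel K) (hA : ∃ C : ℝ, CondA T α C K K')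
    (φ : ℝ → ℝ → ℝ) (hlam : 0 < lam) (hlam' : lam ≤ 1)
    (hφ : (IsStrongHolderBi T lam φ ∧ α < lam) ∨ (IsHolderBi T lam φ ∧ 2 * α < lam)) :
    ∀ ε > 0, ∃ δ > 0, ∀ P Q : Partition T, max P.mesh Q.mesh < δ →
      |RSsum P Q φ (covR K) - ∫ r in (0:ℝ)..T, KstarT T K K' φ r r| < ε := by
  simpa only [HasYoungIntegral, stieltjesSum₂_eq_RSsum, Real.norm_eq_abs] using
    (youngIntegral_covR_exists_general hT hα hα' hK hA hφ).2

end YS
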